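/- Let Δ be a complete fan in ℝ^n. For σ ∈ Δ define e_σ^∨ ⊂ B as the union of the sets d_{(τ₀,…,τ_k)} over all flags τ₀ ⊊ ⋯ ⊊ τ_k in Δ such that σ is a face of τ₀. Then e_σ^∨ is homeomorphic to a closed Euclidean ball of dimension n − dim σ, and the union of the sets e_σ^∨ over all σ ∈ Δ equals the closed unit ball B. -/

import Mathlib

open scoped RealInnerProductSpace

noncomputable section

abbrev Euc (n : ℕ) := EuclideanSpace ℝ (Fin n)

/-- A vector of `ℝ^n` has integral coordinates. -/
def IsIntegralVec {n : ℕ} (x : Euc n) : Prop := ∀ i, ∃ m : ℤ, x i = (m : ℝ)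

/-- A rational polyhedral cone in `ℝ^n`. -/
def IsRatPolyCone {n : ℕ} (σ : Set (Euc n)) : Prop :=
  ∃ (k : ℕ) (v : Fin k → Euc n), (∀ i, IsIntegralVec (v i)) ∧
    σ = {x | ∃ lam : Fin k → ℝ, (∀ i, 0 ≤ lam i) ∧ x = ∑ i, lam i • v i}

/-- Strict convexity of a cone: `σ ∩ (−σ) = {0}`. -/
def IsStrictlyConvexCone {n : ℕ} (σ : Set (Euc n)) : Prop := σ ∩ (-σ) = {0}

/-- The dual cone. -/
def dualCone {n : ℕ} (σ : Set (Euc n)) : Set (Euc n) := {u | ∀ x ∈ σ, 0 ≤ ⟪u, x⟫}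

/-- The orthogonal of a cone. -/
def orthCone {n : ℕ} (σ : Set (Euc n)) : Set (Euc n) := {u | ∀ x ∈ σ, ⟪u, x⟫ = 0}

/-- `τ` is a face of `σ`. -/
def IsFaceOf {n : ℕ} (τ σ : Set (Euc n)) : Prop :=
  ∃ u ∈ dualCone σ, τ = σ ∩ {x | ⟪u, x⟫ = 0}

/-- The dimension of a cone: the dimension of its linear span. -/
def coneDim {n : ℕ} (σ : Set (Euc n)) : ℕ := Module.finrank ℝ (Submodule.span ℝ σ)

/-- A fan in `ℝ^n`. -/
structure IsFan {n : ℕ} (Δ : Set (Set (Euc n))) : Prop where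
  finite : Δ.Finite
  poly : ∀ σ ∈ Δ, IsRatPolyCone σ
  strictconv : ∀ σ ∈ Δ, IsStrictlyConvexCone σ
  face_mem : ∀ σ ∈ Δ, ∀ τ, IsFaceOf τ σ → τ ∈ Δ
  inter_face : ∀ σ ∈ Δ, ∀ τ ∈ Δ, IsFaceOf (σ ∩ τ) σ ∧ IsFaceOf (σ ∩ τ) τ

/-- A complete fan: the union of the cones is everything. -/
def IsCompleteFan {n : ℕ} (Δ : Set (Set (Euc n))) : Prop :=
  IsFan Δ ∧ ⋃₀ Δ = Set.univ

/-- A flag `τ₀ ⊊ τ₁ ⊊ ⋯ ⊊ τ_k` of cones in the fan `Δ`, where each `τ_i`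
is a proper face of `τ_{i+1}`. -/
def IsFlag {n : ℕ} (Δ : Set (Set (Euc n))) {k : ℕ} (τ : Fin (k + 1) → Set (Euc n)) : Prop :=
  (∀ i, τ i ∈ Δ) ∧
    ∀ i : Fin k, IsFaceOf (τ i.castSucc) (τ i.succ) ∧ τ i.castSucc ≠ τ i.succ

/-- `v_σ`: the sum of the unit vectors `u_ρ` over the one-dimensional cones
`ρ ∈ Δ` that are faces of `σ`; here `u : Set (Euc n) → Euc n` is a choice of
the unit vector of each one-dimensional cone. -/
def vVec {n : ℕ} (Δ : Set (Set (Euc n))) (u : Set (Euc n) → Euc n)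
    (σ : Set (Euc n)) : Euc n :=
  ∑ᶠ ρ ∈ {ρ | ρ ∈ Δ ∧ IsFaceOf ρ σ ∧ coneDim ρ = 1}, u ρ

/-- The choice function `u` assigns to every one-dimensional cone of `Δ` the
unique unit vector it contains. -/
def IsUnitVecChoice {n : ℕ} (Δ : Set (Set (Euc n))) (u : Set (Euc n) → Euc n) : Prop :=
  ∀ ρ ∈ Δ, coneDim ρ = 1 → u ρ ∈ ρ ∧ ‖u ρ‖ = 1

/-- The cone generated by finitely many vectors `w₀, …, w_{m−1}`. -/
def coneOf {n m : ℕ} (w : Fin m → Euc n) : Set (Euc n) :=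
  {x | ∃ μ : Fin m → ℝ, (∀ i, 0 ≤ μ i) ∧ x = ∑ i, μ i • w i}

open scoped Classical in
/-- The cell `d_{(τ₀,…,τ_k)}` of the ball associated to a flag in `Δ`. -/
def dSet {n : ℕ} (Δ : Set (Set (Euc n))) (u : Set (Euc n) → Euc n)
    {k : ℕ} (τ : Fin (k + 1) → Set (Euc n)) : Set (Euc n) :=
  if τ 0 = ({0} : Set (Euc n)) then
    (if k = 0 then {0}
     else coneOf (fun i : Fin k => vVec Δ u (τ i.succ)) ∩ Metric.closedBall (0 : Euc n) 1)
  else coneOf (fun i => vVec Δ u (τ i)) ∩ Metric.sphere (0 : Euc n) 1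

/-- The dual cell `e_σ^∨ ⊆ B`: the union of the cells `d_{(τ₀,…,τ_k)}` over
all flags of `Δ` whose smallest member `τ₀` has `σ` as a face. -/
def eDualCell {n : ℕ} (Δ : Set (Set (Euc n))) (u : Set (Euc n) → Euc n)
    (σ : Set (Euc n)) : Set (Euc n) :=
  ⋃ (k : ℕ) (τ : Fin (k + 1) → Set (Euc n))
    (_ : IsFlag Δ τ ∧ IsFaceOf σ (τ 0)), dSet Δ u τ

/-!
Modulo the span of `σ`, every vector of `ℝ^n` is in exactly one way a nonnegative combination of
vectors `v_τ` along a chain of cones strictly containing `σ`. By completeness the vector lies in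
some cone `τ ⊇ σ` after a multiple of `v_σ` is added; move in the direction `-v_τ` until a proper
face of `τ` containing `σ` is reached, and repeat there. The coefficients are unique because a
positive combination along a chain lies in the relative interior of its largest cone, even after
an element of `σ` is added.

Allowing a coefficient of `v_σ` as well, the cone `K` of nonnegative coefficient vectors supported
on chains of cones containing `σ` is mapped bijectively onto `[0, ∞) × ℝ^n / ℝσ`. Hence, by radial
projection, its cross-section `K ∩ {‖x‖ = 1}` is homeomorphic to a ball of dimension `n - dim σ`.
For `σ ≠ {0}` the combinations formed in `ℝ^n` itself are injective on `K`, and radial projection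
identifies the same cross-section with `e_σ^∨`. For `σ = {0}` the cell is the whole ball.
-/

section RadialProjection

open Metric

/-- A continuous, positively homogeneous function which is positive on the nonzero points of `C`.
When `C` is a cone, its level set `{N = 1}` meets every ray of `C` exactly once. -/
structure IsGaugeOn {X : Type*} [AddCommGroup X] [Module ℝ X] [TopologicalSpace X]
    (C : Set X) (N : X → ℝ) : Prop where
  continuous : Continuous N
  map_smul : ∀ c : ℝ, 0 ≤ c → ∀ x, N (c • x) = c * N x
  pos : ∀ x ∈ C, x ≠ 0 → 0 < N x

namespace IsGaugeOn

section Homeomorph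

variable {X : Type*} [AddCommGroup X] [Module ℝ X] [TopologicalSpace X]
  {C : Set X} {N N₁ N₂ : X → ℝ}

lemma map_zero (hN : IsGaugeOn C N) : N 0 = 0 := by
  simpa using hN.map_smul 0 le_rfl 0

lemma pos_of_eq_one (h₁ : IsGaugeOn C N₁) (h₂ : IsGaugeOn C N₂) {x : X} (hx : x ∈ C)
    (hx₁ : N₁ x = 1) : 0 < N₂ x := by
  refine h₂.pos x hx ?_
  rintro rfl
  exact zero_ne_one (h₁.map_zero.symm.trans hx₁)

lemma inv_smul_mem (hC : ∀ c : ℝ, 0 ≤ c → ∀ x ∈ C, c • x ∈ C) (h₁ : IsGaugeOn C N₁)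
    (h₂ : IsGaugeOn C N₂) {x : X} (hx : x ∈ C ∩ N₁ ⁻¹' {1}) :
    (N₂ x)⁻¹ • x ∈ C ∩ N₂ ⁻¹' {1} := by
  have hpos := h₁.pos_of_eq_one h₂ hx.1 hx.2
  refine ⟨hC _ (inv_nonneg.2 hpos.le) x hx.1, ?_⟩
  rw [Set.mem_preimage, h₂.map_smul _ (inv_nonneg.2 hpos.le), inv_mul_cancel₀ hpos.ne']
  rfl

lemma inv_smul_inv_smul (h₁ : IsGaugeOn C N₁) (h₂ : IsGaugeOn C N₂) {x : X}
    (hx : x ∈ C ∩ N₁ ⁻¹' {1}) : (N₁ ((N₂ x)⁻¹ • x))⁻¹ • (N₂ x)⁻¹ • x = x := by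
  have hpos := h₁.pos_of_eq_one h₂ hx.1 hx.2
  have hx₁ : N₁ x = 1 := hx.2
  rw [h₁.map_smul _ (inv_nonneg.2 hpos.le), hx₁, mul_one, inv_inv, smul_inv_smul₀ hpos.ne']

/-- Radial projection between the cross-sections of a cone cut out by two gauges. -/
def homeomorph [ContinuousSMul ℝ X] (hC : ∀ c : ℝ, 0 ≤ c → ∀ x ∈ C, c • x ∈ C)
    (h₁ : IsGaugeOn C N₁) (h₂ : IsGaugeOn C N₂) :
    ↥(C ∩ N₁ ⁻¹' {1}) ≃ₜ ↥(C ∩ N₂ ⁻¹' {1}) where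
  toFun x := ⟨(N₂ x)⁻¹ • x, inv_smul_mem hC h₁ h₂ x.2⟩
  invFun x := ⟨(N₁ x)⁻¹ • x, inv_smul_mem hC h₂ h₁ x.2⟩
  left_inv x := Subtype.ext (inv_smul_inv_smul h₁ h₂ x.2)
  right_inv x := Subtype.ext (inv_smul_inv_smul h₂ h₁ x.2)
  continuous_toFun := (((h₂.continuous.comp continuous_subtype_val).inv₀ fun x =>
    (h₁.pos_of_eq_one h₂ x.2.1 x.2.2).ne').smul continuous_subtype_val).subtype_mk _
  continuous_invFun := (((h₁.continuous.comp continuous_subtype_val).inv₀ fun x =>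
    (h₂.pos_of_eq_one h₁ x.2.1 x.2.2).ne').smul continuous_subtype_val).subtype_mk _

end Homeomorph

section Normed

variable {X E W : Type*} [NormedAddCommGroup X] [NormedSpace ℝ X]
  [NormedAddCommGroup E] [NormedSpace ℝ E] [NormedAddCommGroup W] [NormedSpace ℝ W] {C : Set X}

lemma norm : IsGaugeOn C (fun x => ‖x‖) where
  continuous := continuous_norm
  map_smul c hc x := by rw [norm_smul, Real.norm_of_nonneg hc]
  pos _ _ hx := norm_pos_iff.2 hx

lemma norm_map (T : X →L[ℝ] E) (hT : Set.InjOn T C) (h0 : (0 : X) ∈ C) :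
    IsGaugeOn C (fun x => ‖T x‖) where
  continuous := by fun_prop
  map_smul c hc x := by rw [_root_.map_smul, norm_smul, Real.norm_of_nonneg hc]
  pos x hx hne := norm_pos_iff.2 fun h => hne (hT hx h0 (h.trans T.map_zero.symm))

lemma add_norm_map (r : X →L[ℝ] ℝ) (q : X →L[ℝ] W) (hr : ∀ x ∈ C, 0 ≤ r x)
    (hrq : Set.InjOn (fun x => (r x, q x)) C) (h0 : (0 : X) ∈ C) :
    IsGaugeOn C (fun x => r x + ‖q x‖) where
  continuous := by fun_prop
  map_smul c hc x := by
    rw [_root_.map_smul, _root_.map_smul, norm_smul, Real.norm_of_nonneg hc, smul_eq_mul, mul_add]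
  pos x hx hne := by
    refine (add_nonneg (hr x hx) (norm_nonneg _)).lt_of_ne' fun h => hne (hrq hx h0 ?_)
    obtain ⟨hrx, hqx⟩ := (add_eq_zero_iff_of_nonneg (hr x hx) (norm_nonneg _)).1 h
    simp [hrx, norm_eq_zero.1 hqx]

end Normed

end IsGaugeOn

lemma nonempty_homeomorph_image_of_isCompact {Y Z : Type*} [TopologicalSpace Y]
    [TopologicalSpace Z] [T2Space Z] {K : Set Y} (hK : IsCompact K) {f : Y → Z}
    (hf : ContinuousOn f K) (hinj : Set.InjOn f K) : Nonempty (K ≃ₜ f '' K) := by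
  have : CompactSpace K := isCompact_iff_compactSpace.1 hK
  have hcont : Continuous (Equiv.Set.imageOfInjOn f K hinj) :=
    (continuousOn_iff_continuous_domRestrict.1 hf).subtype_mk _
  exact ⟨hcont.homeoOfEquivCompactToT2⟩

lemma injOn_of_injOn_prodMk {Y W : Type*} [NormedAddCommGroup W] {C : Set Y}
    {r : Y → ℝ} {q : Y → W} (hrq : Set.InjOn (fun x => (r x, q x)) C) :
    Set.InjOn q (C ∩ (fun x => r x + ‖q x‖) ⁻¹' {1}) := by
  rintro x ⟨hx, hx1⟩ y ⟨hy, hy1⟩ hxy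
  refine hrq hx hy (Prod.ext ?_ hxy)
  simp only [Set.mem_preimage, Set.mem_singleton_iff, hxy] at hx1 hy1 ⊢
  linarith

lemma image_inter_add_norm_eq_closedBall {Y W : Type*} [NormedAddCommGroup W] {C : Set Y}
    {r : Y → ℝ} {q : Y → W} (hrq : (fun x => (r x, q x)) '' C = Set.Ici 0 ×ˢ Set.univ) :
    q '' (C ∩ (fun x => r x + ‖q x‖) ⁻¹' {1}) = closedBall 0 1 := by
  ext w
  rw [mem_closedBall_zero_iff]
  constructor
  · rintro ⟨x, ⟨hx, hx1⟩, rfl⟩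
    have hrx : 0 ≤ r x := (hrq.subset (Set.mem_image_of_mem _ hx)).1
    simp only [Set.mem_preimage, Set.mem_singleton_iff] at hx1
    linarith
  · intro hw
    have hmem : (1 - ‖w‖, w) ∈ (fun x => (r x, q x)) '' C := by
      rw [hrq]
      exact ⟨sub_nonneg.2 hw, trivial⟩
    obtain ⟨x, hx, hxw⟩ := hmem
    obtain ⟨hrx, rfl⟩ := Prod.mk.inj hxw
    exact ⟨x, ⟨hx, by simp [hrx]⟩, rfl⟩

variable {X E W : Type*} [NormedAddCommGroup X] [NormedSpace ℝ X] [ProperSpace X]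
  [NormedAddCommGroup E] [NormedSpace ℝ E] [NormedAddCommGroup W] [NormedSpace ℝ W]
  {C : Set X}

lemma IsGaugeOn.nonempty_homeomorph_image {Z : Type*} [TopologicalSpace Z] [T2Space Z]
    {N : X → ℝ} (hN : IsGaugeOn C N) (hclosed : IsClosed C)
    (hC : ∀ c : ℝ, 0 ≤ c → ∀ x ∈ C, c • x ∈ C) {f : X → Z} (hf : Continuous f)
    (hinj : Set.InjOn f (C ∩ N ⁻¹' {1})) :
    Nonempty (↥(C ∩ sphere 0 1) ≃ₜ f '' (C ∩ N ⁻¹' {1})) := by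
  have hsphere : (fun x : X => ‖x‖) ⁻¹' {1} = sphere 0 1 := by ext; simp
  let e : ↥(C ∩ sphere 0 1) ≃ₜ ↥(C ∩ N ⁻¹' {1}) :=
    (Homeomorph.setCongr (by rw [hsphere])).trans (IsGaugeOn.norm.homeomorph hC hN)
  have hcompact : IsCompact (C ∩ N ⁻¹' {1}) := by
    have := isCompact_iff_compactSpace.1 ((isCompact_sphere (0 : X) 1).inter_left hclosed)
    exact isCompact_iff_compactSpace.2 e.compactSpace
  obtain ⟨g⟩ := nonempty_homeomorph_image_of_isCompact hcompact hf.continuousOn hinj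
  exact ⟨e.trans g⟩

theorem nonempty_homeomorph_image_inter_sphere_closedBall (hclosed : IsClosed C)
    (hC : ∀ c : ℝ, 0 ≤ c → ∀ x ∈ C, c • x ∈ C) {T : X →L[ℝ] E} (hT : Set.InjOn T C)
    {r : X →L[ℝ] ℝ} {q : X →L[ℝ] W}
    (hrq : Set.BijOn (fun x => (r x, q x)) C (Set.Ici 0 ×ˢ Set.univ)) :
    Nonempty (↥(T '' C ∩ sphere 0 1) ≃ₜ closedBall (0 : W) 1) := by
  have h0 : (0 : X) ∈ C := by
    obtain ⟨x, hx, -⟩ := hrq.surjOn (show ((0, 0) : ℝ × W) ∈ _ from ⟨Set.self_mem_Ici, trivial⟩)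
    simpa using hC 0 le_rfl x hx
  have hsphere : T '' (C ∩ (fun x => ‖T x‖) ⁻¹' {1}) = T '' C ∩ sphere 0 1 := by
    rw [← Set.image_inter_preimage]
    congr 2
    ext
    simp
  obtain ⟨e⟩ := (IsGaugeOn.norm_map T hT h0).nonempty_homeomorph_image hclosed hC T.continuous
    (hT.mono Set.inter_subset_left)
  obtain ⟨g⟩ := (IsGaugeOn.add_norm_map r q (fun x hx => (hrq.mapsTo hx).1) hrq.injOn
    h0).nonempty_homeomorph_image hclosed hC q.continuous (injOn_of_injOn_prodMk hrq.injOn)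
  rw [hsphere] at e
  rw [image_inter_add_norm_eq_closedBall hrq.image_eq] at g
  exact ⟨e.symm.trans g⟩

end RadialProjection

section ChainCone

open Function Set

/-- The cone over the order complex of `J`: the nonnegative functions on the ambient poset whose
support is a chain in `J`. -/
def chainCone {I : Type*} [Preorder I] (J : Set I) : Set (I → ℝ) :=
  {b | 0 ≤ b ∧ IsChain (· ≤ ·) (support b) ∧ support b ⊆ J}

section Preorder

variable {I : Type*} [Preorder I] {J K : Set I} {b b' : I → ℝ}

lemma mem_chainCone_of_support_subset (hb : b ∈ chainCone J) (hb' : 0 ≤ b')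
    (hsupp : support b' ⊆ support b) : b' ∈ chainCone J :=
  ⟨hb', hb.2.1.mono hsupp, hsupp.trans hb.2.2⟩

lemma chainCone_mono (hJK : J ⊆ K) : chainCone J ⊆ chainCone K :=
  fun _ hb => ⟨hb.1, hb.2.1, hb.2.2.trans hJK⟩

lemma zero_mem_chainCone : (0 : I → ℝ) ∈ chainCone J := by
  simp [chainCone]

lemma smul_mem_chainCone (c : ℝ) (hc : 0 ≤ c) (b : I → ℝ) (hb : b ∈ chainCone J) :
    c • b ∈ chainCone J :=
  mem_chainCone_of_support_subset hb (smul_nonneg hc hb.1) (support_const_smul_subset c b)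

lemma add_single_mem_chainCone [DecidableEq I] (hb : b ∈ chainCone J) {s : I} (hs : s ∈ J)
    (hcomp : ∀ i ∈ support b, s ≤ i ∨ i ≤ s) {c : ℝ} (hc : 0 ≤ c) :
    b + Pi.single s c ∈ chainCone J := by
  have hsupp : support (b + Pi.single s c) ⊆ insert s (support b) :=
    (support_add _ _).trans (union_subset (subset_insert _ _)
      (Pi.support_single_subset.trans (singleton_subset_iff.2 (mem_insert _ _))))
  exact ⟨add_nonneg hb.1 (Pi.single_nonneg.2 hc),
    (hb.2.1.insert fun i hi _ => hcomp i hi).mono hsupp,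
    hsupp.trans (insert_subset hs hb.2.2)⟩

lemma isClosed_chainCone : IsClosed (chainCone J) := by
  have heq : chainCone J = Ici 0 ∩
      ((⋂ (i) (j) (_ : ¬(i ≤ j ∨ j ≤ i)), {b | b i * b j = 0}) ∩ ⋂ i ∈ Jᶜ, {b | b i = 0}) := by
    ext b
    simp only [chainCone, mem_inter_iff, mem_iInter, mem_ofPred_eq, mem_Ici, mem_compl_iff]
    refine and_congr_right fun _ => and_congr ⟨fun hchain i j hij => ?_, fun hmul i hi j hj _ => ?_⟩
      support_subset_iff'
    · by_contra hne
      exact hij (hchain.total (left_ne_zero_of_mul hne) (right_ne_zero_of_mul hne))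
    · by_contra hij
      exact mul_ne_zero hi hj (hmul i j hij)
  rw [heq]
  exact isClosed_Ici.inter <| .inter
    (isClosed_iInter fun i => isClosed_iInter fun j => isClosed_iInter fun _ =>
      isClosed_eq (by fun_prop) (by fun_prop))
    (isClosed_biInter fun i _ => isClosed_eq (by fun_prop) (by fun_prop))

lemma exists_isGreatest_support [Finite I] (hb : b ∈ chainCone J) (hne : b ≠ 0) :
    ∃ i, IsGreatest (support b) i := by
  obtain ⟨i, hi⟩ := (toFinite (support b)).exists_maximal (support_nonempty_iff.2 hne)
  exact ⟨i, hi.prop, fun j hj => (hb.2.1.total hi.prop hj).elim (fun hij => hi.le_of_ge hj hij) id⟩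

/-- Subtracting the common part `b ⊓ b'` makes the supports disjoint. -/
lemma injOn_chainCone {W : Type*} [AddCommGroup W] [Module ℝ W] {f : (I → ℝ) →ₗ[ℝ] W}
    (hf : ∀ b ∈ chainCone J, ∀ b' ∈ chainCone J, Disjoint (support b) (support b') →
      f b = f b' → b = 0) : InjOn f (chainCone J) := by
  have hle : ∀ b ∈ chainCone J, ∀ b' ∈ chainCone J, f b = f b' → b ≤ b' := by
    intro b hb b' hb' heq
    have hsub : ∀ {c c' : I → ℝ}, c ∈ chainCone J → 0 ≤ c' → c - c ⊓ c' ∈ chainCone J := by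
      intro c c' hc hc'
      refine mem_chainCone_of_support_subset hc (sub_nonneg.2 inf_le_left) fun i hi => ?_
      contrapose! hi
      simpa [notMem_support.1 hi] using hc' i
    have hdisj : Disjoint (support (b - b ⊓ b')) (support (b' - b' ⊓ b)) := by
      refine disjoint_left.2 fun i hi hi' => ?_
      rcases le_total (b i) (b' i) with h | h <;> simp_all
    have hzero := hf _ (hsub hb hb'.1) _ (hsub hb' hb.1) hdisj (by
      rw [map_sub, map_sub, heq, inf_comm])
    exact inf_eq_left.1 (sub_eq_zero.1 hzero).symm
  exact fun b hb b' hb' heq => (hle b hb b' hb' heq).antisymm (hle b' hb' b hb heq.symm)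

end Preorder

section PartialOrder

variable {I : Type*} [PartialOrder I] {J : Set I} {b : I → ℝ} {s : I}

lemma sub_single_mem_chainCone_Ioi [DecidableEq I] (hb : b ∈ chainCone (Ici s)) :
    b - Pi.single s (b s) ∈ chainCone (Ioi s) := by
  have happly : ∀ i ≠ s, (b - Pi.single s (b s) : I → ℝ) i = b i := fun i hi => by simp [hi]
  have hsupp : support (b - Pi.single s (b s)) ⊆ support b \ {s} := by
    intro i hi
    have his : i ≠ s := by
      rintro rfl
      simp at hi
    rw [mem_support, happly i his] at hi
    exact ⟨hi, his⟩
  have hnonneg : 0 ≤ b - Pi.single s (b s) := by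
    intro i
    by_cases his : i = s
    · simp [his]
    · rw [happly i his]
      exact hb.1 i
  refine ⟨hnonneg, hb.2.1.mono (hsupp.trans sdiff_subset), fun i hi => ?_⟩
  exact (hb.2.2 (hsupp hi).1).lt_of_ne (Ne.symm (hsupp hi).2)

lemma bijOn_chainCone_Ici [DecidableEq I] {W : Type*} [AddCommGroup W] [Module ℝ W]
    {f : (I → ℝ) →ₗ[ℝ] W} (hs : f (Pi.single s 1) = 0)
    (hf : BijOn f (chainCone (Ioi s)) univ) :
    BijOn (fun b => (b s, f b)) (chainCone (Ici s)) (Ici 0 ×ˢ univ) := by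
  have hsingle : ∀ c : ℝ, f (Pi.single s c) = 0 := fun c => by
    rw [← mul_one c, ← smul_eq_mul, Pi.single_smul, map_smul, hs, smul_zero]
  refine ⟨fun b hb => ⟨hb.1 s, trivial⟩, fun b hb b' hb' heq => ?_, ?_⟩
  · obtain ⟨hbs, hfb⟩ := Prod.mk.inj heq
    have hsub := hf.injOn (sub_single_mem_chainCone_Ioi hb) (sub_single_mem_chainCone_Ioi hb')
      (by rw [map_sub, map_sub, hsingle, hsingle, hfb])
    rw [hbs] at hsub
    exact sub_left_injective hsub
  · rintro ⟨c, w⟩ ⟨hc, -⟩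
    obtain ⟨b, hb, rfl⟩ := hf.surjOn (mem_univ w)
    have hbs : b s = 0 := notMem_support.1 fun h => lt_irrefl s (hb.2.2 h)
    refine ⟨b + Pi.single s c, add_single_mem_chainCone (chainCone_mono Ioi_subset_Ici_self hb)
      self_mem_Ici (fun i hi => .inl (hb.2.2 hi).le) hc, ?_⟩
    simp [hbs, hsingle]

lemma exists_strictMono_range_eq {c : Set I} (hc : IsChain (· ≤ ·) c) (hfin : c.Finite)
    (hne : c.Nonempty) : ∃ (k : ℕ) (t : Fin (k + 1) → I), StrictMono t ∧ range t = c := by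
  classical
  have := hfin.fintype
  have := hne.to_subtype
  let _ := hc.linearOrder
  obtain ⟨k, hk⟩ := Nat.exists_eq_succ_of_ne_zero (Fintype.card_ne_zero (α := c))
  let e : Fin (k + 1) ≃o c := Fintype.orderIsoFinOfCardEq c hk
  refine ⟨k, fun i => e i, fun i j hij => e.strictMono hij, ?_⟩
  rw [range_comp', e.range_eq, image_univ, Subtype.range_coe]

lemma exists_strictMono_of_mem_chainCone_Ici [Finite I] (hb : b ∈ chainCone (Ici s)) :
    ∃ (k : ℕ) (t : Fin (k + 1) → I), StrictMono t ∧ t 0 = s ∧ support b ⊆ range t := by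
  have hchain : IsChain (· ≤ ·) (insert s (support b)) :=
    hb.2.1.insert fun i hi _ => .inl (hb.2.2 hi)
  obtain ⟨k, t, ht, hrange⟩ :=
    exists_strictMono_range_eq hchain (toFinite _) (insert_nonempty _ _)
  refine ⟨k, t, ht, le_antisymm ?_ ?_, hrange ▸ subset_insert _ _⟩
  · obtain ⟨j, rfl⟩ := hrange ▸ mem_insert s (support b)
    exact ht.monotone (Fin.zero_le j)
  · rcases hrange ▸ mem_range_self (f := t) 0 with h | h
    exacts [h.ge, hb.2.2 h]

end PartialOrder

end ChainCone

section Weyl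

open PointedCone

variable {R M N : Type*} [Field R] [LinearOrder R] [AddCommGroup M] [Module R M]
  [AddCommGroup N] [Module R N] {p : M →ₗ[R] N →ₗ[R] R}

/-- The system obtained from `0 ≤ p h x` (`h ∈ S`) by Fourier–Motzkin elimination along `y`. -/
def fourierMotzkin (p : M →ₗ[R] N →ₗ[R] R) (S : Set M) (y : N) : Set M :=
  {h ∈ S | 0 ≤ p h y} ∪
    Set.image2 (fun a b => p a y • b - p b y • a) {a ∈ S | 0 < p a y} {b ∈ S | p b y < 0}

lemma finite_fourierMotzkin {S : Set M} (hS : S.Finite) (y : N) : (fourierMotzkin p S y).Finite :=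
  (hS.sep _).union ((hS.sep _).image2 _ (hS.sep _))

variable [IsStrictOrderedRing R]

lemma mem_sup_hull_singleton_iff {C : PointedCone R N} {x y : N} :
    x ∈ C ⊔ hull R {y} ↔ ∃ c : R, 0 ≤ c ∧ x - c • y ∈ C := by
  rw [Submodule.mem_sup]
  constructor
  · rintro ⟨z, hz, w, hw, rfl⟩
    obtain ⟨c, rfl⟩ := Submodule.mem_span_singleton.1 hw
    exact ⟨c, c.2, (add_sub_cancel_right z (c • y)).symm ▸ hz⟩
  · rintro ⟨c, hc, hx⟩
    exact ⟨_, hx, _, Submodule.mem_span_singleton.2 ⟨⟨c, hc⟩, rfl⟩, sub_add_cancel _ _⟩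

lemma dual_fourierMotzkin {S : Set M} (hS : S.Finite) (y : N) :
    dual p (fourierMotzkin p S y) = dual p S ⊔ hull R {y} := by
  ext x
  simp only [mem_sup_hull_singleton_iff, mem_dual, map_sub, map_smul, smul_eq_mul, sub_nonneg]
  constructor
  · intro hx
    obtain ⟨c, hc, hmax⟩ := Set.exists_max_image (insert 0 ((fun b => p b x / p b y) ''
      {b ∈ S | p b y < 0})) id (((hS.sep _).image _).insert 0) (Set.insert_nonempty _ _)
    refine ⟨c, hmax 0 (Set.mem_insert _ _), fun h hh => ?_⟩
    rcases lt_or_ge (p h y) 0 with hneg | hpos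
    · exact (div_le_iff_of_neg hneg).1
        (hmax _ (Set.mem_insert_of_mem _ (Set.mem_image_of_mem _ ⟨hh, hneg⟩)))
    have hhx : 0 ≤ p h x := hx (.inl ⟨hh, hpos⟩)
    rcases hpos.eq_or_lt with hzero | hpos
    · rwa [← hzero, mul_zero]
    rcases hc with rfl | ⟨b, ⟨hb, hneg⟩, rfl⟩
    · rwa [zero_mul]
    · have hcross := hx (.inr (Set.mem_image2_of_mem ⟨hh, hpos⟩ ⟨hb, hneg⟩))
      simp only [map_sub, map_smul, LinearMap.sub_apply, LinearMap.smul_apply, smul_eq_mul,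
        sub_nonneg] at hcross
      rw [div_mul_eq_mul_div, div_le_iff_of_neg hneg]
      linarith
  · rintro ⟨c, hc, hx⟩ h (⟨hh, hpos⟩ | ⟨a, ⟨ha, hpos⟩, b, ⟨hb, hneg⟩, rfl⟩)
    · exact (mul_nonneg hc hpos).trans (hx hh)
    · simp only [map_sub, map_smul, LinearMap.sub_apply, LinearMap.smul_apply, smul_eq_mul,
        sub_nonneg]
      calc p b y * p a x ≤ p b y * (c * p a y) := mul_le_mul_of_nonpos_left (hx ha) hneg.le
        _ = p a y * (c * p b y) := by ring
        _ ≤ p a y * p b x := mul_le_mul_of_nonneg_left (hx hb) hpos.le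

lemma dualFG_sup_hull_singleton {C : PointedCone R N} (hC : C.DualFG p) (y : N) :
    (C ⊔ hull R {y}).DualFG p := by
  obtain ⟨S, rfl⟩ := hC
  rw [← dual_fourierMotzkin S.finite_toSet]
  exact DualFG.dual_of_finite p (finite_fourierMotzkin S.finite_toSet y)

theorem dualFG_of_fg (hbot : (⊥ : PointedCone R N).DualFG p) {C : PointedCone R N}
    (hC : C.FG) : C.DualFG p := by
  classical
  obtain ⟨S, rfl⟩ := hC
  induction S using Finset.induction_on with
  | empty => simpa using hbot
  | insert y S _ ih =>
    rw [Finset.coe_insert, Submodule.span_insert, sup_comm]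
    exact dualFG_sup_hull_singleton ih y

lemma bot_dualFG_innerₗ {E : Type*} [NormedAddCommGroup E] [InnerProductSpace ℝ E]
    [FiniteDimensional ℝ E] : (⊥ : PointedCone ℝ E).DualFG (innerₗ E) := by
  let B := Module.finBasis ℝ E
  have hdual : dual (innerₗ E) (Set.range B ∪ Set.range (-⇑B)) = ⊥ := by
    refine eq_bot_iff.2 fun x hx => (Submodule.mem_bot _).2 ?_
    refine InnerProductSpace.ext_inner_left_basis B fun i => ?_
    have hpos : 0 ≤ ⟪B i, x⟫ := hx (.inl ⟨i, rfl⟩)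
    have hneg : 0 ≤ ⟪-B i, x⟫ := hx (.inr ⟨i, rfl⟩)
    rw [inner_neg_left] at hneg
    rw [inner_zero_right]
    linarith
  rw [← hdual]
  exact DualFG.dual_of_finite _ ((Set.finite_range _).union (Set.finite_range _))

end Weyl

section Faces

variable {n : ℕ} {σ F : Set (Euc n)} {C : PointedCone ℝ (Euc n)} {x y p : Euc n}

lemma IsFaceOf.subset (hF : IsFaceOf F σ) : F ⊆ σ := by
  obtain ⟨h, -, rfl⟩ := hF
  exact Set.inter_subset_left

lemma IsFaceOf.left_mem_of_add_mem (hF : IsFaceOf F σ) (hx : x ∈ σ) (hy : y ∈ σ)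
    (hxy : x + y ∈ F) : x ∈ F := by
  obtain ⟨h, hh, rfl⟩ := hF
  have hsum : ⟪h, x⟫ + ⟪h, y⟫ = 0 := (inner_add_right h x y).symm.trans hxy.2
  exact ⟨hx, ((add_eq_zero_iff_of_nonneg (hh x hx) (hh y hy)).1 hsum).1⟩

lemma IsFaceOf.mem_of_smul_mem (hF : IsFaceOf F σ) (hx : x ∈ σ) {c : ℝ} (hc : c ≠ 0)
    (hcx : c • x ∈ F) : x ∈ F := by
  obtain ⟨h, -, rfl⟩ := hF
  have hzero : c * ⟪h, x⟫ = 0 := (real_inner_smul_right h x c).symm.trans hcx.2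
  exact ⟨hx, (mul_eq_zero.1 hzero).resolve_left hc⟩

/-- The points of `σ` lying on no proper face of `σ`. For a polyhedral cone this is its relative
interior. -/
def relInterior (σ : Set (Euc n)) : Set (Euc n) :=
  {x ∈ σ | ∀ F, IsFaceOf F σ → x ∈ F → F = σ}

lemma add_mem_relInterior (hx : x ∈ C) (hy : y ∈ relInterior C) :
    x + y ∈ relInterior (C : Set (Euc n)) :=
  ⟨C.add_mem hx hy.1, fun F hF hxy =>
    hy.2 F hF (hF.left_mem_of_add_mem hy.1 hx (add_comm x y ▸ hxy))⟩

lemma smul_mem_relInterior (hx : x ∈ relInterior C) {c : ℝ} (hc : 0 < c) :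
    c • x ∈ relInterior (C : Set (Euc n)) :=
  ⟨C.smul_mem hc.le hx.1, fun F hF hcx => hx.2 F hF (hF.mem_of_smul_mem hx.1 hc.ne' hcx)⟩

lemma sum_mem_relInterior {ι : Type*} {s : Finset ι} {f : ι → Euc n} (hf : ∀ i ∈ s, f i ∈ C)
    {j : ι} (hj : j ∈ s) (hfj : f j ∈ relInterior C) :
    ∑ i ∈ s, f i ∈ relInterior (C : Set (Euc n)) := by
  classical
  rw [← Finset.sum_erase_add s f hj]
  exact add_mem_relInterior (C.sum_mem fun i hi => hf i (Finset.mem_of_mem_erase hi)) hfj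

lemma exists_finite_normals (hC : C.FG) :
    ∃ S : Set (Euc n), S.Finite ∧ ∀ x, x ∈ C ↔ ∀ h ∈ S, 0 ≤ ⟪h, x⟫ := by
  obtain ⟨S, rfl⟩ := dualFG_of_fg bot_dualFG_innerₗ hC
  exact ⟨S, S.finite_toSet, fun x => Iff.rfl⟩

lemma isClosed_of_fg (hC : C.FG) : IsClosed (C : Set (Euc n)) := by
  obtain ⟨S, rfl⟩ := dualFG_of_fg bot_dualFG_innerₗ hC
  exact PointedCone.isClosed_dual fun h => (innerSL ℝ h).continuous

lemma isFaceOf_singleton_zero (hC : C.FG) (hstrict : IsStrictlyConvexCone (C : Set (Euc n))) :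
    IsFaceOf {0} (C : Set (Euc n)) := by
  obtain ⟨S, hS, hmem⟩ := exists_finite_normals hC
  have hnonneg : ∀ x ∈ C, ∀ h ∈ hS.toFinset, 0 ≤ ⟪h, x⟫ := fun x hx h hh =>
    (hmem x).1 hx h (hS.mem_toFinset.1 hh)
  refine ⟨∑ h ∈ hS.toFinset, h, fun x hx => ?_, ?_⟩
  · rw [sum_inner]
    exact Finset.sum_nonneg (hnonneg x hx)
  · refine Set.Subset.antisymm (Set.singleton_subset_iff.2 ⟨C.zero_mem, inner_zero_right _⟩) ?_
    rintro x ⟨hx, hsum⟩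
    rw [Set.mem_ofPred_eq, sum_inner, Finset.sum_eq_zero_iff_of_nonneg (hnonneg x hx)] at hsum
    rw [← hstrict]
    refine ⟨hx, (hmem (-x)).2 fun h hh => ?_⟩
    rw [inner_neg_right, hsum h (hS.mem_toFinset.2 hh), neg_zero]

lemma exists_forall_nonneg_inner_add_smul {S : Set (Euc n)} (hS : S.Finite)
    (hp : ∀ h ∈ S, 0 ≤ ⟪h, p⟫) (hx : ∀ h ∈ S, ⟪h, p⟫ = 0 → 0 ≤ ⟪h, x⟫) :
    ∃ N : ℝ, ∀ h ∈ S, 0 ≤ ⟪h, x + N • p⟫ := by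
  refine Filter.Eventually.exists (f := Filter.atTop)
    ((Filter.eventually_all_finite hS).2 fun h hh => ?_)
  simp only [inner_add_right, real_inner_smul_right]
  rcases (hp h hh).eq_or_lt with hzero | hpos
  · exact .of_forall fun N => by simpa [← hzero] using hx h hh hzero.symm
  · exact (Filter.tendsto_atTop_add_const_left _ _
      (Filter.tendsto_id.atTop_mul_const hpos)).eventually_ge_atTop 0

/-- Moving from `x` in the direction `-y`, one leaves the cone through a face; the summand `N • p`
means that this happens in the local cone of `C` at `p`. -/
theorem exists_sub_smul_mem_face (hC : C.FG) (hx : x ∈ C) (hy : y ∈ C) (hF : IsFaceOf F C)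
    (hp : p ∈ F) (hyF : y ∉ F) :
    ∃ c : ℝ, 0 ≤ c ∧ ∃ N : ℝ, ∃ F', IsFaceOf F' C ∧ p ∈ F' ∧ y ∉ F' ∧ x - c • y + N • p ∈ F' := by
  obtain ⟨S, hS, hmem⟩ := exists_finite_normals hC
  obtain ⟨u, hu, rfl⟩ := hF
  have hdual : ∀ h ∈ insert u S, h ∈ dualCone (C : Set (Euc n)) := by
    rintro h (rfl | hh)
    exacts [hu, fun z hz => (hmem z).1 hz h hh]
  let A : Set (Euc n) := {h ∈ insert u S | ⟪h, p⟫ = 0 ∧ 0 < ⟪h, y⟫}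
  have huA : u ∈ A := ⟨Set.mem_insert _ _, hp.2, (hu y hy).lt_of_ne' fun h => hyF ⟨hy, h⟩⟩
  obtain ⟨h₀, ⟨hh₀, hp₀, hy₀⟩, hmin⟩ :=
    Set.exists_min_image A (fun h => ⟪h, x⟫ / ⟪h, y⟫) ((hS.insert u).sep _) ⟨u, huA⟩
  set c := ⟪h₀, x⟫ / ⟪h₀, y⟫ with hc
  have hlocal : ∀ h ∈ S, ⟪h, p⟫ = 0 → 0 ≤ ⟪h, x - c • y⟫ := by
    intro h hh hhp
    have hhS := Set.mem_insert_of_mem u hh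
    rw [inner_sub_right, real_inner_smul_right, sub_nonneg]
    rcases (hdual h hhS y hy).eq_or_lt with hzero | hpos
    · rw [← hzero, mul_zero]
      exact hdual h hhS x hx
    · exact (le_div_iff₀ hpos).1 (hmin h ⟨hhS, hhp, hpos⟩)
  obtain ⟨N, hN⟩ := exists_forall_nonneg_inner_add_smul hS ((hmem p).1 hp.1) hlocal
  refine ⟨c, div_nonneg (hdual h₀ hh₀ x hx) hy₀.le, N, _, ⟨h₀, hdual h₀ hh₀, rfl⟩, ⟨hp.1, hp₀⟩,
    fun h => hy₀.ne' h.2, (hmem _).2 hN, ?_⟩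
  rw [Set.mem_ofPred_eq, inner_add_right, inner_sub_right, real_inner_smul_right,
    real_inner_smul_right, hp₀, hc, div_mul_cancel₀ _ hy₀.ne', sub_self, mul_zero, add_zero]

lemma exists_sub_eq_of_mem_span {R M : Type*} [Ring R] [LinearOrder R] [IsOrderedRing R]
    [AddCommGroup M] [Module R M] {C : PointedCone R M} {x : M}
    (hx : x ∈ Submodule.span R (C : Set M)) : ∃ a ∈ C, ∃ b ∈ C, x = a - b := by
  induction hx using Submodule.span_induction with
  | mem x hx => exact ⟨x, hx, 0, C.zero_mem, (sub_zero x).symm⟩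
  | zero => exact ⟨0, C.zero_mem, 0, C.zero_mem, (sub_zero 0).symm⟩
  | add x y _ _ hx hy =>
    obtain ⟨a, ha, b, hb, rfl⟩ := hx
    obtain ⟨a', ha', b', hb', rfl⟩ := hy
    exact ⟨a + a', C.add_mem ha ha', b + b', C.add_mem hb hb', by abel⟩
  | smul c x _ hx =>
    obtain ⟨a, ha, b, hb, rfl⟩ := hx
    rcases le_total 0 c with hc | hc
    · exact ⟨c • a, C.smul_mem hc ha, c • b, C.smul_mem hc hb, smul_sub c a b⟩
    · have hc' := neg_nonneg.2 hc
      exact ⟨-c • b, C.smul_mem hc' hb, -c • a, C.smul_mem hc' ha, by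
        rw [smul_sub, neg_smul, neg_smul]; abel⟩

end Faces

section PolyhedralFans

variable {n : ℕ} {Δ : Set (Set (Euc n))} {σ τ ρ : Set (Euc n)} {x y p : Euc n}
  {u : Set (Euc n) → Euc n}

lemma coneOf_eq_hull {m : ℕ} (w : Fin m → Euc n) :
    coneOf w = (PointedCone.hull ℝ (Set.range w) : Set (Euc n)) := by
  ext x
  refine Iff.trans ?_ (Submodule.mem_span_range_iff_exists_fun _).symm
  constructor
  · rintro ⟨μ, hμ, rfl⟩
    exact ⟨fun i => ⟨μ i, hμ i⟩, rfl⟩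
  · rintro ⟨μ, rfl⟩
    exact ⟨fun i => μ i, fun i => (μ i).2, rfl⟩

/-- A fan of cones which are finitely generated, but not necessarily by integral vectors. -/
structure IsPolyhedralFan (Δ : Set (Set (Euc n))) : Prop where
  finite : Δ.Finite
  poly : ∀ σ ∈ Δ, ∃ C : PointedCone ℝ (Euc n), C.FG ∧ (C : Set (Euc n)) = σ
  strictconv : ∀ σ ∈ Δ, IsStrictlyConvexCone σ
  face_mem : ∀ σ ∈ Δ, ∀ τ, IsFaceOf τ σ → τ ∈ Δ
  inter_face : ∀ σ ∈ Δ, ∀ τ ∈ Δ, IsFaceOf (σ ∩ τ) σ ∧ IsFaceOf (σ ∩ τ) τ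

lemma IsFan.isPolyhedralFan (hΔ : IsFan Δ) : IsPolyhedralFan Δ where
  finite := hΔ.finite
  poly σ hσ := by
    obtain ⟨k, w, -, rfl⟩ := hΔ.poly σ hσ
    exact ⟨_, Submodule.fg_span (Set.finite_range w), (coneOf_eq_hull w).symm⟩
  strictconv := hΔ.strictconv
  face_mem := hΔ.face_mem
  inter_face := hΔ.inter_face

/-- A choice of a nonzero vector on every ray of `Δ`. -/
def IsRayGenerator (Δ : Set (Set (Euc n))) (u : Set (Euc n) → Euc n) : Prop :=
  ∀ ρ ∈ Δ, coneDim ρ = 1 → u ρ ∈ ρ ∧ u ρ ≠ 0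

lemma IsUnitVecChoice.isRayGenerator (hu : IsUnitVecChoice Δ u) : IsRayGenerator Δ u :=
  fun ρ hρ hdim => ⟨(hu ρ hρ hdim).1, norm_ne_zero_iff.1 (by simp [(hu ρ hρ hdim).2])⟩

lemma zero_mem_relInterior_singleton : (0 : Euc n) ∈ relInterior {0} :=
  ⟨rfl, fun _ hF h0 => hF.subset.antisymm (Set.singleton_subset_iff.2 h0)⟩

lemma coneDim_singleton_zero : coneDim ({0} : Set (Euc n)) = 0 := by
  rw [coneDim, Submodule.span_zero_singleton, finrank_bot]

lemma subset_of_coneDim_eq_one (hρ : coneDim ρ = 1) (hx : x ∈ ρ) (hx0 : x ≠ 0)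
    {V : Submodule ℝ (Euc n)} (hxV : x ∈ V) : ρ ⊆ V := by
  intro y hy
  obtain ⟨c, hc⟩ := (finrank_eq_one_iff_of_nonzero'
    (⟨x, Submodule.subset_span hx⟩ : Submodule.span ℝ ρ) (by simpa using hx0)).1 hρ
    ⟨y, Submodule.subset_span hy⟩
  have hcx : c • x = y := congrArg Subtype.val hc
  exact hcx ▸ V.smul_mem c hxV

lemma mem_of_sub_smul_mem {C : PointedCone ℝ (Euc n)}
    (hstrict : IsStrictlyConvexCone (C : Set (Euc n))) {V : Submodule ℝ (Euc n)} {c d : ℝ}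
    (hc : 0 ≤ c) (hxC : x - c • y ∈ C) (hxV : x - c • y ∈ V) (hyC : y - d • x ∈ C)
    (hyV : y - d • x ∈ V) (hyx : y ∉ Submodule.span ℝ {x}) : x ∈ V := by
  have hsum : (1 - c * d) • x = x - c • y + c • (y - d • x) := by module
  by_cases hcd : 1 - c * d = 0
  · have hneg : -(x - c • y) ∈ C := by
      rw [hcd, zero_smul, eq_comm] at hsum
      exact neg_eq_of_add_eq_zero_right hsum ▸ C.smul_mem hc hyC
    have hzero : x - c • y ∈ ({0} : Set (Euc n)) := hstrict ▸ ⟨hxC, hneg⟩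
    refine absurd (Submodule.mem_span_singleton.2 ⟨d, ?_⟩) hyx
    rw [sub_eq_zero.1 hzero, smul_smul, mul_comm, ← sub_eq_zero.1 hcd, one_smul]
  · exact (V.smul_mem_iff hcd).1 (hsum ▸ V.add_mem hxV (V.smul_mem c hyV))

namespace IsPolyhedralFan

lemma zero_mem (hΔ : IsPolyhedralFan Δ) (hσ : σ ∈ Δ) : (0 : Euc n) ∈ σ := by
  obtain ⟨C, -, rfl⟩ := hΔ.poly σ hσ
  exact C.zero_mem

lemma singleton_zero_subset (hΔ : IsPolyhedralFan Δ) (hσ : σ ∈ Δ) : {0} ⊆ σ :=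
  Set.singleton_subset_iff.2 (hΔ.zero_mem hσ)

lemma singleton_zero_mem (hΔ : IsPolyhedralFan Δ) (hσ : σ ∈ Δ) : {0} ∈ Δ := by
  obtain ⟨C, hC, rfl⟩ := hΔ.poly σ hσ
  exact hΔ.face_mem _ hσ _ (isFaceOf_singleton_zero hC (hΔ.strictconv _ hσ))

lemma isFaceOf_iff_subset (hΔ : IsPolyhedralFan Δ) (hσ : σ ∈ Δ) (hτ : τ ∈ Δ) :
    IsFaceOf σ τ ↔ σ ⊆ τ :=
  ⟨IsFaceOf.subset, fun h => Set.inter_eq_left.2 h ▸ (hΔ.inter_face σ hσ τ hτ).2⟩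

lemma subset_of_mem_relInterior (hΔ : IsPolyhedralFan Δ) (hσ : σ ∈ Δ) (hτ : τ ∈ Δ)
    (hxσ : x ∈ relInterior σ) (hxτ : x ∈ τ) : σ ⊆ τ :=
  Set.inter_eq_left.1 (hxσ.2 _ (hΔ.inter_face σ hσ τ hτ).1 ⟨hxσ.1, hxτ⟩)

lemma isClosed_of_mem (hΔ : IsPolyhedralFan Δ) (hσ : σ ∈ Δ) : IsClosed σ := by
  obtain ⟨C, hC, rfl⟩ := hΔ.poly σ hσ
  exact isClosed_of_fg hC

lemma exists_sub_smul_mem_ssubset (hΔ : IsPolyhedralFan Δ) (hσ : σ ∈ Δ) (hτ : τ ∈ Δ)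
    (hστ : σ ⊆ τ) (hp : p ∈ relInterior σ) (hx : x ∈ τ) (hy : y ∈ τ) (hyσ : y ∉ σ) :
    ∃ c : ℝ, 0 ≤ c ∧ ∃ N : ℝ, ∃ τ' ∈ Δ, σ ⊆ τ' ∧ τ' ⊂ τ ∧ x - c • y + N • p ∈ τ' := by
  have hface := (hΔ.isFaceOf_iff_subset hσ hτ).2 hστ
  obtain ⟨C, hC, rfl⟩ := hΔ.poly τ hτ
  obtain ⟨c, hc, N, τ', hτ', hpτ', hyτ', hmem⟩ := exists_sub_smul_mem_face hC hx hy hface hp.1 hyσ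
  have hτ'Δ := hΔ.face_mem _ hτ _ hτ'
  exact ⟨c, hc, N, τ', hτ'Δ, hΔ.subset_of_mem_relInterior hσ hτ'Δ hp hpτ',
    hτ'.subset.ssubset_of_mem_notMem hy hyτ', hmem⟩

theorem subset_of_rays_subset (hΔ : IsPolyhedralFan Δ) (hτ : τ ∈ Δ) {V : Submodule ℝ (Euc n)}
    (hV : ∀ ρ ∈ Δ, ρ ⊆ τ → coneDim ρ = 1 → ρ ⊆ V) : τ ⊆ V := by
  refine (hΔ.finite.wellFoundedOn (r := (· ⊂ ·))).induction
    (P := fun τ => (∀ ρ ∈ Δ, ρ ⊆ τ → coneDim ρ = 1 → ρ ⊆ V) → τ ⊆ V) hτ (fun τ hτ ih hV => ?_) hV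
  have hface : ∀ {x y}, x ∈ τ → y ∈ τ → y ≠ 0 →
      ∃ c : ℝ, 0 ≤ c ∧ x - c • y ∈ τ ∧ x - c • y ∈ V := by
    intro x y hx hy hy0
    obtain ⟨c, hc, N, τ', hτ', -, hτ'τ, hmem⟩ := hΔ.exists_sub_smul_mem_ssubset
      (hΔ.singleton_zero_mem hτ) hτ (hΔ.singleton_zero_subset hτ)
      zero_mem_relInterior_singleton hx hy hy0
    rw [smul_zero, add_zero] at hmem
    exact ⟨c, hc, hτ'τ.subset hmem,
      ih τ' hτ' hτ'τ (fun ρ hρ hρτ' => hV ρ hρ (hρτ'.trans hτ'τ.subset)) hmem⟩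
  intro x hx
  rcases eq_or_ne x 0 with rfl | hx0
  · exact V.zero_mem
  by_cases hspan : τ ⊆ Submodule.span ℝ {x}
  · have hle : Submodule.span ℝ τ = Submodule.span ℝ {x} :=
      (Submodule.span_le.2 hspan).antisymm (Submodule.span_mono (Set.singleton_subset_iff.2 hx))
    exact hV τ hτ subset_rfl (by rw [coneDim, hle, finrank_span_singleton hx0]) hx
  · obtain ⟨y, hy, hyx⟩ := Set.not_subset.1 hspan
    have hy0 : y ≠ 0 := by
      rintro rfl
      exact hyx (Submodule.zero_mem _)
    obtain ⟨c, hc, hxτ, hxV⟩ := hface hx hy hy0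
    obtain ⟨d, -, hyτ, hyV⟩ := hface hy hx hx0
    obtain ⟨C, -, rfl⟩ := hΔ.poly τ hτ
    exact mem_of_sub_smul_mem (hΔ.strictconv _ hτ) hc hxτ hxV hyτ hyV hyx

theorem vVec_mem_relInterior (hΔ : IsPolyhedralFan Δ) (hu : IsRayGenerator Δ u) (hτ : τ ∈ Δ) :
    vVec Δ u τ ∈ relInterior τ := by
  have hfin : {ρ | ρ ∈ Δ ∧ IsFaceOf ρ τ ∧ coneDim ρ = 1}.Finite :=
    hΔ.finite.subset fun ρ hρ => hρ.1
  have hmem : ∀ ρ ∈ hfin.toFinset, u ρ ∈ τ := fun ρ hρ => by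
    obtain ⟨hρΔ, hρτ, hdim⟩ := hfin.mem_toFinset.1 hρ
    exact hρτ.subset (hu ρ hρΔ hdim).1
  rw [vVec, finsum_mem_eq_finite_toFinset_sum _ hfin]
  refine ⟨?_, ?_⟩
  · obtain ⟨C, -, rfl⟩ := hΔ.poly τ hτ
    exact C.sum_mem hmem
  · rintro F ⟨h, hh, rfl⟩ ⟨-, hsum⟩
    rw [Set.mem_ofPred_eq, inner_sum,
      Finset.sum_eq_zero_iff_of_nonneg fun ρ hρ => hh _ (hmem ρ hρ)] at hsum
    refine Set.inter_eq_left.2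
      (hΔ.subset_of_rays_subset hτ (V := (innerₗ (Euc n) h).ker) fun ρ hρ hρτ hdim => ?_)
    obtain ⟨huρ, hne⟩ := hu ρ hρ hdim
    exact subset_of_coneDim_eq_one hdim huρ hne
      (hsum ρ (hfin.mem_toFinset.2 ⟨hρ, (hΔ.isFaceOf_iff_subset hρ hτ).2 hρτ, hdim⟩))

lemma vVec_singleton_zero (hΔ : IsPolyhedralFan Δ) (hu : IsRayGenerator Δ u) (h0 : {0} ∈ Δ) :
    vVec Δ u {0} = 0 :=
  (hΔ.vVec_mem_relInterior hu h0).1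

/-- The cones containing `σ` cover a neighbourhood of each relative interior point `p` of `σ`. -/
theorem exists_add_smul_mem (hΔ : IsPolyhedralFan Δ) (hcompl : ⋃₀ Δ = Set.univ) (hσ : σ ∈ Δ)
    (hp : p ∈ relInterior σ) (w : Euc n) : ∃ τ ∈ Δ, σ ⊆ τ ∧ ∃ N : ℝ, w + N • p ∈ τ := by
  have hnear : ∀ᶠ z in nhds p, ∀ τ ∈ Δ, p ∉ τ → z ∉ τ :=
    (Filter.eventually_all_finite hΔ.finite).2 fun τ hτ =>
      Filter.eventually_imp_distrib_left.2 (hΔ.isClosed_of_mem hτ).isOpen_compl.mem_nhds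
  have htendsto : Filter.Tendsto (fun m : ℕ => p + (1 / ((m : ℝ) + 1)) • w) Filter.atTop
      (nhds p) := by
    simpa using ((tendsto_one_div_add_atTop_nhds_zero_nat (𝕜 := ℝ)).smul_const w).const_add p
  obtain ⟨m, hm⟩ := (htendsto.eventually hnear).exists
  obtain ⟨τ, hτ, hmτ⟩ : p + (1 / ((m : ℝ) + 1)) • w ∈ ⋃₀ Δ := hcompl ▸ Set.mem_univ _
  have hpτ : p ∈ τ := by_contra fun h => hm τ hτ h hmτ
  refine ⟨τ, hτ, hΔ.subset_of_mem_relInterior hσ hτ hp hpτ, m + 1, ?_⟩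
  have hpos : (0 : ℝ) < m + 1 := by positivity
  have heq : w + ((m : ℝ) + 1) • p = ((m : ℝ) + 1) • (p + (1 / ((m : ℝ) + 1)) • w) := by
    rw [smul_add, smul_smul, mul_one_div_cancel hpos.ne', one_smul, add_comm]
  obtain ⟨C, -, rfl⟩ := hΔ.poly τ hτ
  exact heq ▸ C.smul_mem hpos.le hmτ

end IsPolyhedralFan

end PolyhedralFans

section Chains

open Function Set

variable {n : ℕ} {Δ : Set (Set (Euc n))} [Fintype Δ] {u : Set (Euc n) → Euc n} {x y : Euc n}
  {s t : Δ} {b : Δ → ℝ}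

/-- The linear map sending the basis vector indexed by `τ ∈ Δ` to `v_τ`. -/
def vMap (Δ : Set (Set (Euc n))) [Fintype Δ] (u : Set (Euc n) → Euc n) : (Δ → ℝ) →ₗ[ℝ] Euc n :=
  Fintype.linearCombination ℝ fun τ : Δ => vVec Δ u τ

lemma vMap_single [DecidableEq Δ] (c : ℝ) : vMap Δ u (Pi.single s c) = c • vVec Δ u s :=
  Fintype.linearCombination_apply_single ℝ _ s c

namespace IsPolyhedralFan

lemma exists_mem_chainCone_sub_mem_span (hΔ : IsPolyhedralFan Δ) (hu : IsRayGenerator Δ u)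
    (hst : s ≤ t) (hx : x ∈ t.1) :
    ∃ b ∈ chainCone (Ioc s t), x - vMap Δ u b ∈ Submodule.span ℝ s.1 := by
  classical
  induction t using WellFoundedLT.induction generalizing x with
  | ind t ih =>
    rcases hst.eq_or_lt with rfl | hlt
    · exact ⟨0, zero_mem_chainCone, by simpa using Submodule.subset_span hx⟩
    have hvs := hΔ.vVec_mem_relInterior hu s.2
    have hvt := hΔ.vVec_mem_relInterior hu t.2
    obtain ⟨c, hc, N, τ', hτ', hsτ', hτ't, hmem⟩ :=
      hΔ.exists_sub_smul_mem_ssubset s.2 t.2 hst hvs hx hvt.1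
        fun h => hlt.not_ge (hΔ.subset_of_mem_relInterior t.2 s.2 hvt h)
    obtain ⟨b, hb, hspan⟩ := ih ⟨τ', hτ'⟩ hτ't hsτ' hmem
    have hle : ⟨τ', hτ'⟩ ≤ t := hτ't.subset
    have hb : b ∈ chainCone (Ioc s t) := chainCone_mono (Ioc_subset_Ioc_right hle) hb
    refine ⟨b + Pi.single t c, add_single_mem_chainCone hb ⟨hlt, le_rfl⟩
      (fun i hi => .inr (hb.2.2 hi).2) hc, ?_⟩
    have hsub := Submodule.sub_mem _ hspan
      (Submodule.smul_mem _ N (Submodule.subset_span (R := ℝ) hvs.1))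
    rw [map_add, vMap_single]
    convert hsub using 1
    abel

lemma vMap_add_mem_relInterior (hΔ : IsPolyhedralFan Δ) (hu : IsRayGenerator Δ u) (hb : 0 ≤ b)
    (ht : IsGreatest (support b) t) (hx : x ∈ t.1) : vMap Δ u b + x ∈ relInterior t.1 := by
  have hv := fun i : Δ => hΔ.vVec_mem_relInterior hu i.2
  obtain ⟨C, -, hC⟩ := hΔ.poly t t.2
  rw [← hC] at hx ⊢
  rw [add_comm]
  refine add_mem_relInterior hx (sum_mem_relInterior (fun i _ => ?_) (Finset.mem_univ t)
    (smul_mem_relInterior (hC ▸ hv t) ((hb t).lt_of_ne' ht.1)))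
  by_cases hi : b i = 0
  · rw [hi, zero_smul]
    exact C.zero_mem
  · exact C.smul_mem (hb i) (hC.ge (ht.2 hi (hv i).1))

lemma injOn_comp_vMap (hΔ : IsPolyhedralFan Δ) (hu : IsRayGenerator Δ u)
    {W : Type*} [AddCommGroup W] [Module ℝ W] {f : Euc n →ₗ[ℝ] W}
    (hf : f.ker = Submodule.span ℝ s.1) : InjOn (f ∘ₗ vMap Δ u) (chainCone (Ioi s)) := by
  refine injOn_chainCone fun b hb b' hb' hdisj heq => by_contra fun hne => ?_
  obtain ⟨a, ha, a', ha', hsub⟩ : ∃ a ∈ s.1, ∃ a' ∈ s.1, vMap Δ u b - vMap Δ u b' = a - a' := by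
    have hmem : vMap Δ u b - vMap Δ u b' ∈ Submodule.span ℝ s.1 := by
      rw [← hf, LinearMap.mem_ker, map_sub]
      exact sub_eq_zero.2 heq
    obtain ⟨C, -, hC⟩ := hΔ.poly s s.2
    rw [← hC] at hmem ⊢
    exact exists_sub_eq_of_mem_span hmem
  rw [sub_eq_sub_iff_add_eq_add, add_comm a] at hsub
  obtain ⟨i, hi⟩ := exists_isGreatest_support hb hne
  have hsi : s < i := hb.2.2 hi.1
  have hint := hΔ.vMap_add_mem_relInterior hu hb.1 hi (hsi.le ha')
  by_cases hne' : b' = 0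
  · rw [hsub, hne', map_zero, zero_add] at hint
    exact hsi.not_ge (hΔ.subset_of_mem_relInterior i.2 s.2 hint ha)
  · obtain ⟨j, hj⟩ := exists_isGreatest_support hb' hne'
    have hsj : s < j := hb'.2.2 hj.1
    have hint' := hΔ.vMap_add_mem_relInterior hu hb'.1 hj (hsj.le ha)
    rw [← hsub] at hint'
    have hij : i = j := le_antisymm (hΔ.subset_of_mem_relInterior i.2 j.2 hint hint'.1)
      (hΔ.subset_of_mem_relInterior j.2 i.2 hint' hint.1)
    exact disjoint_left.1 hdisj hi.1 (hij ▸ hj.1)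

/-- The cones spanned by the `v_τ` along chains strictly above `s` form a complete simplicial fan
modulo the span of `s`. -/
theorem bijOn_comp_vMap (hΔ : IsPolyhedralFan Δ) (hcompl : ⋃₀ Δ = univ) (hu : IsRayGenerator Δ u)
    {W : Type*} [AddCommGroup W] [Module ℝ W] {f : Euc n →ₗ[ℝ] W}
    (hf : f.ker = Submodule.span ℝ s.1) (hsurj : Surjective f) :
    BijOn (f ∘ₗ vMap Δ u) (chainCone (Ioi s)) univ := by
  refine ⟨mapsTo_univ _ _, hΔ.injOn_comp_vMap hu hf, fun w _ => ?_⟩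
  obtain ⟨x, rfl⟩ := hsurj w
  have hvs := hΔ.vVec_mem_relInterior hu s.2
  obtain ⟨τ, hτ, hsτ, N, hmem⟩ := hΔ.exists_add_smul_mem hcompl s.2 hvs x
  obtain ⟨b, hb, hspan⟩ := hΔ.exists_mem_chainCone_sub_mem_span hu (t := ⟨τ, hτ⟩) hsτ hmem
  have hfv : f (vVec Δ u s) = 0 := LinearMap.mem_ker.1 (hf ▸ Submodule.subset_span hvs.1)
  rw [← hf, LinearMap.mem_ker, map_sub, map_add, map_smul, hfv, smul_zero, add_zero,
    sub_eq_zero] at hspan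
  exact ⟨b, chainCone_mono Ioc_subset_Ioi_self hb, hspan.symm⟩

end IsPolyhedralFan

end Chains

section DualCells

open Function Set

variable {n : ℕ} {Δ : Set (Set (Euc n))} {u : Set (Euc n) → Euc n} {σ τ : Set (Euc n)}

lemma coneOf_comp_eq_image {I : Type*} [Fintype I] (v : I → Euc n) {m : ℕ} {t : Fin m → I}
    (ht : Injective t) : coneOf (v ∘ t) =
      Fintype.linearCombination ℝ v '' {b | 0 ≤ b ∧ support b ⊆ range t} := by
  have hsum : ∀ b : I → ℝ, support b ⊆ range t →
      ∑ j, b (t j) • v (t j) = Fintype.linearCombination ℝ v b := fun b hb =>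
    Fintype.sum_of_injective t ht _ _
      (fun i hi => by rw [notMem_support.1 fun h => hi (hb h), zero_smul]) fun _ => rfl
  apply Subset.antisymm
  · rintro _ ⟨μ, hμ, rfl⟩
    have hsupp : support (extend t μ 0) ⊆ range t :=
      support_subset_iff'.2 fun i hi => extend_apply' _ _ _ hi
    refine ⟨extend t μ 0, ⟨fun i => ?_, hsupp⟩, ?_⟩
    · by_cases hi : i ∈ range t
      · obtain ⟨j, rfl⟩ := hi
        simpa [ht.extend_apply] using hμ j
      · simp [extend_apply' _ _ _ hi]
    · simp [← hsum _ hsupp, ht.extend_apply]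
  · rintro _ ⟨b, ⟨hb, hsupp⟩, rfl⟩
    exact ⟨b ∘ t, fun j => hb (t j), (hsum b hsupp).symm⟩

open scoped Classical in
/-- The part of the ball containing the cells of the flags which start at `σ`: the whole ball `B`
if `σ` is the origin, and the sphere `S` otherwise. -/
def ballOrSphere (σ : Set (Euc n)) : Set (Euc n) :=
  if σ = {0} then Metric.closedBall 0 1 else Metric.sphere 0 1

lemma ballOrSphere_singleton_zero :
    ballOrSphere ({0} : Set (Euc n)) = Metric.closedBall 0 1 :=
  if_pos rfl

lemma ballOrSphere_of_ne (hσ : σ ≠ {0}) : ballOrSphere σ = Metric.sphere 0 1 :=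
  if_neg hσ

lemma ballOrSphere_anti (hστ : σ ⊆ τ) (h0 : 0 ∈ σ) : ballOrSphere τ ⊆ ballOrSphere σ := by
  by_cases hτ : τ = {0}
  · rw [hτ, (hστ.trans hτ.subset).antisymm (singleton_subset_iff.2 h0)]
  · rw [ballOrSphere_of_ne hτ]
    by_cases hσ : σ = {0}
    · rw [hσ, ballOrSphere_singleton_zero]
      exact Metric.sphere_subset_closedBall
    · rw [ballOrSphere_of_ne hσ]

lemma dSet_eq_coneOf_inter (hv : vVec Δ u {0} = 0) {k : ℕ} (τ : Fin (k + 1) → Set (Euc n)) :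
    dSet Δ u τ = coneOf (vVec Δ u ∘ τ) ∩ ballOrSphere (τ 0) := by
  by_cases hτ : τ 0 = {0}
  · have hcone : coneOf (vVec Δ u ∘ τ) = coneOf fun i : Fin k => vVec Δ u (τ i.succ) := by
      rw [coneOf_eq_hull, coneOf_eq_hull, Fin.range_fin_succ, comp_apply, hτ, hv]
      exact congrArg _ Submodule.span_insert_zero
    rw [dSet, if_pos hτ, hτ, ballOrSphere_singleton_zero, hcone]
    split_ifs with hk
    · subst hk
      rw [coneOf_eq_hull, range_eq_empty]
      simp [PointedCone.hull]
    · rfl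
  · rw [dSet, if_neg hτ, ballOrSphere_of_ne hτ]
    rfl

lemma exists_proj_ker_eq (V : Submodule ℝ (Euc n)) :
    ∃ f : Euc n →ₗ[ℝ] Euc (n - Module.finrank ℝ V), f.ker = V ∧ Surjective f := by
  have hrank : Module.finrank ℝ (Euc n ⧸ V) =
      Module.finrank ℝ (Euc (n - Module.finrank ℝ V)) := by
    rw [Submodule.finrank_quotient, finrank_euclideanSpace_fin, finrank_euclideanSpace_fin]
  let e := LinearEquiv.ofFinrankEq _ _ hrank
  refine ⟨e.toLinearMap ∘ₗ V.mkQ, ?_, e.surjective.comp V.mkQ_surjective⟩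
  rw [LinearEquiv.ker_comp, Submodule.ker_mkQ]

lemma eDualCell_subset_closedBall : eDualCell Δ u σ ⊆ Metric.closedBall 0 1 := by
  simp only [eDualCell, iUnion_subset_iff]
  intro k τ _
  rw [dSet]
  split_ifs
  · exact singleton_subset_iff.2 (Metric.mem_closedBall_self zero_le_one)
  · exact inter_subset_right
  · exact inter_subset_right.trans Metric.sphere_subset_closedBall

namespace IsPolyhedralFan

lemma isFlag_iff_exists_strictMono (hΔ : IsPolyhedralFan Δ) {k : ℕ}
    {τ : Fin (k + 1) → Set (Euc n)} :
    IsFlag Δ τ ↔ ∃ t : Fin (k + 1) → Δ, StrictMono t ∧ Subtype.val ∘ t = τ := by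
  constructor
  · rintro ⟨hmem, hface⟩
    refine ⟨fun i => ⟨τ i, hmem i⟩, Fin.strictMono_iff_lt_succ.2 fun i => ?_, rfl⟩
    exact (hface i).1.subset.ssubset_of_ne (hface i).2
  · rintro ⟨t, ht, rfl⟩
    refine ⟨fun i => (t i).2, fun i => ?_⟩
    have hlt : t i.castSucc < t i.succ := ht i.castSucc_lt_succ
    exact ⟨(hΔ.isFaceOf_iff_subset (t _).2 (t _).2).2 hlt.le, fun h => hlt.ne (Subtype.ext h)⟩

theorem eDualCell_eq_image_inter [Fintype Δ] (hΔ : IsPolyhedralFan Δ) (hu : IsRayGenerator Δ u)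
    (s : Δ) : eDualCell Δ u s = vMap Δ u '' chainCone (Ici s) ∩ ballOrSphere s.1 := by
  have hdSet : ∀ {k : ℕ} {t : Fin (k + 1) → Δ}, StrictMono t → dSet Δ u (Subtype.val ∘ t) =
      vMap Δ u '' {b | 0 ≤ b ∧ support b ⊆ range t} ∩ ballOrSphere (t 0).1 := fun ht => by
    rw [dSet_eq_coneOf_inter (hΔ.vVec_singleton_zero hu (hΔ.singleton_zero_mem s.2)),
      ← comp_assoc, coneOf_comp_eq_image _ ht.injective]
    rfl
  apply Subset.antisymm
  · simp only [eDualCell, iUnion_subset_iff]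
    rintro k τ ⟨hflag, hface⟩
    obtain ⟨t, ht, rfl⟩ := hΔ.isFlag_iff_exists_strictMono.1 hflag
    rw [hdSet ht]
    refine inter_subset_inter (image_mono fun b hb => ⟨hb.1, ?_, hb.2.trans ?_⟩)
      (ballOrSphere_anti hface.subset (hΔ.zero_mem s.2))
    · exact ht.monotone.isChain_range.mono hb.2
    · exact range_subset_iff.2 fun i => le_trans hface.subset (ht.monotone (Fin.zero_le i))
  · rintro _ ⟨⟨b, hb, rfl⟩, hmem⟩
    obtain ⟨k, t, ht, rfl, hsupp⟩ := exists_strictMono_of_mem_chainCone_Ici hb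
    simp only [eDualCell, mem_iUnion]
    refine ⟨k, Subtype.val ∘ t, ⟨hΔ.isFlag_iff_exists_strictMono.2 ⟨t, ht, rfl⟩,
      (hΔ.isFaceOf_iff_subset (τ := (t 0).1) (t 0).2 (t 0).2).2 subset_rfl⟩, ?_⟩
    rw [hdSet ht]
    exact ⟨⟨b, ⟨hb.1, hsupp⟩, rfl⟩, hmem⟩

lemma bijOn_vMap [Fintype Δ] (hΔ : IsPolyhedralFan Δ) (hcompl : ⋃₀ Δ = univ)
    (hu : IsRayGenerator Δ u) (h0 : {0} ∈ Δ) : BijOn (vMap Δ u) (chainCone (Ioi ⟨{0}, h0⟩)) univ :=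
  hΔ.bijOn_comp_vMap hcompl hu (f := LinearMap.id)
    (by rw [LinearMap.ker_id, Submodule.span_zero_singleton]) surjective_id

lemma eDualCell_singleton_zero (hΔ : IsPolyhedralFan Δ) (hcompl : ⋃₀ Δ = univ)
    (hu : IsRayGenerator Δ u) (h0 : {0} ∈ Δ) : eDualCell Δ u {0} = Metric.closedBall 0 1 := by
  have := hΔ.finite.fintype
  have himage : vMap Δ u '' chainCone (Ici ⟨{0}, h0⟩) = univ :=
    univ_subset_iff.1 ((hΔ.bijOn_vMap hcompl hu h0).image_eq.ge.trans
      (image_mono (chainCone_mono Ioi_subset_Ici_self)))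
  rw [hΔ.eDualCell_eq_image_inter hu ⟨{0}, h0⟩, himage, univ_inter, ballOrSphere_singleton_zero]

theorem nonempty_homeomorph_eDualCell (hΔ : IsPolyhedralFan Δ) (hcompl : ⋃₀ Δ = univ)
    (hu : IsRayGenerator Δ u) (hσ : σ ∈ Δ) (hne : σ ≠ {0}) :
    Nonempty (eDualCell Δ u σ ≃ₜ Metric.closedBall (0 : Euc (n - coneDim σ)) 1) := by
  classical
  have := hΔ.finite.fintype
  let s : Δ := ⟨σ, hσ⟩
  obtain ⟨f, hker, hsurj⟩ := exists_proj_ker_eq (Submodule.span ℝ σ)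
  have hfs : f (vMap Δ u (Pi.single s 1)) = 0 := by
    rw [vMap_single, one_smul, ← LinearMap.mem_ker, hker]
    exact Submodule.subset_span (hΔ.vVec_mem_relInterior hu hσ).1
  have hbij : BijOn (fun b => (b s, f (vMap Δ u b))) (chainCone (Ici s)) (Ici 0 ×ˢ univ) :=
    bijOn_chainCone_Ici hfs (hΔ.bijOn_comp_vMap hcompl hu hker hsurj)
  have hlt : ⟨{0}, hΔ.singleton_zero_mem hσ⟩ < s :=
    (hΔ.singleton_zero_subset hσ).ssubset_of_ne hne.symm
  have hinj : InjOn (vMap Δ u) (chainCone (Ici s)) :=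
    (hΔ.bijOn_vMap hcompl hu _).injOn.mono (chainCone_mono (Ici_subset_Ioi.2 hlt))
  rw [hΔ.eDualCell_eq_image_inter hu s, ballOrSphere_of_ne hne]
  exact nonempty_homeomorph_image_inter_sphere_closedBall isClosed_chainCone smul_mem_chainCone
    (T := (vMap Δ u).toContinuousLinearMap) (r := ContinuousLinearMap.proj s)
    (q := (f ∘ₗ vMap Δ u).toContinuousLinearMap) hinj hbij

end IsPolyhedralFan

end DualCells

theorem dual_cells_decompose_ball_general {n : ℕ} {Δ : Set (Set (Euc n))}
    (hΔ : IsPolyhedralFan Δ) (hcompl : ⋃₀ Δ = Set.univ) {u : Set (Euc n) → Euc n}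
    (hu : IsRayGenerator Δ u) :
    (∀ σ ∈ Δ, Nonempty (eDualCell Δ u σ ≃ₜ Metric.closedBall (0 : Euc (n - coneDim σ)) 1)) ∧
    (⋃ σ ∈ Δ, eDualCell Δ u σ) = Metric.closedBall (0 : Euc n) 1 := by
  obtain ⟨τ, hτ, -⟩ : (0 : Euc n) ∈ ⋃₀ Δ := hcompl ▸ Set.mem_univ 0
  have h0 := hΔ.singleton_zero_mem hτ
  have hball := hΔ.eDualCell_singleton_zero hcompl hu h0
  refine ⟨fun σ hσ => ?_, ?_⟩
  · rcases eq_or_ne σ {0} with rfl | hne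
    · rw [coneDim_singleton_zero, hball]
      exact ⟨Homeomorph.refl _⟩
    · exact hΔ.nonempty_homeomorph_eDualCell hcompl hu hσ hne
  · refine (Set.iUnion₂_subset fun σ _ => eDualCell_subset_closedBall).antisymm ?_
    rw [← hball]
    exact Set.subset_biUnion_of_mem (u := fun σ => eDualCell Δ u σ) h0

/-- For a complete fan `Δ` in `ℝ^n`, each dual cell
`e_σ^∨` (`σ ∈ Δ`) is homeomorphic to a closed Euclidean ball of dimension
`n − dim σ`, and the dual cells cover the closed unit ball `B`. -/
theorem dual_cells_decompose_ball {n : ℕ}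
    (Δ : Set (Set (Euc n))) (hΔ : IsCompleteFan Δ)
    (u : Set (Euc n) → Euc n) (hu : IsUnitVecChoice Δ u) :
    (∀ σ ∈ Δ,
      Nonempty ((eDualCell Δ u σ : Set (Euc n)) ≃ₜ
        (Metric.closedBall (0 : Euc (n - coneDim σ)) 1 : Set (Euc (n - coneDim σ))))) ∧
    (⋃ σ ∈ Δ, eDualCell Δ u σ) = Metric.closedBall (0 : Euc n) 1 :=
  dual_cells_decompose_ball_general hΔ.1.isPolyhedralFan hΔ.2 hu.isRayGenerator

end
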